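/- Let 0 < α_π < α_ν. For each t > 0 define, with the linear schedule α_v := (1 − v/t)α_ν + (v/t)α_π, the quantity G_t := (1/t) ∫_0^t exp( −2 ∫_s^t α_v dv ) ds. Then G_t ~ 1/(2 α_π t) as t → ∞; that is, the function t ↦ 2 α_π t · G_t tends to 1 as t → ∞. -/

import Mathlib

open MeasureTheory Real intervalIntegral Filter

/-!
In the reversed, rescaled variable `s = t (1 - x)` the integral becomes `t * ∫₀¹ exp (-t A(x)) dx`,
where `A(x)` is the integral of the rescaled schedule over `[1 - x, 1]`. This is Laplace's method at
the endpoint `0`: only the slope of `A` there, which is the value of the schedule at its final time,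
contributes to the limit, provided `A` grows at least linearly on `[0, 1]`.
-/

section

open Set Topology

theorem tendsto_intervalIntegral_integral_Ioi_of_dominated {ι E : Type*} [NormedAddCommGroup E]
    [NormedSpace ℝ E] {μ : Measure ℝ} {l : Filter ι} [l.IsCountablyGenerated] {F : ι → ℝ → E}
    {f : ℝ → E} {bound : ℝ → ℝ} {a : ℝ} {b : ι → ℝ} (hb : Tendsto b l atTop)
    (hF_meas : ∀ᶠ i in l, AEStronglyMeasurable (F i) (μ.restrict (Ioc a (b i))))
    (h_bound : ∀ᶠ i in l, ∀ᵐ u ∂μ, u ∈ Ioc a (b i) → ‖F i u‖ ≤ bound u)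
    (bound_integrable : IntegrableOn bound (Ioi a) μ)
    (h_lim : ∀ᵐ u ∂μ, u ∈ Ioi a → Tendsto (fun i => F i u) l (𝓝 (f u))) :
    Tendsto (fun i => ∫ u in a..b i, F i u ∂μ) l (𝓝 (∫ u in Ioi a, f u ∂μ)) := by
  have h_truncated : Tendsto (fun i => ∫ u in Ioi a, (Iic (b i)).indicator (F i) u ∂μ) l
      (𝓝 (∫ u in Ioi a, f u ∂μ)) := by
    refine tendsto_integral_filter_of_dominated_convergence (fun u => ‖bound u‖) ?_ ?_
      bound_integrable.norm ?_
    · filter_upwards [hF_meas] with i hi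
      rwa [aestronglyMeasurable_indicator_iff measurableSet_Iic,
        Measure.restrict_restrict measurableSet_Iic, inter_comm, Ioi_inter_Iic]
    · filter_upwards [h_bound] with i hi
      filter_upwards [ae_restrict_mem measurableSet_Ioi, ae_restrict_of_ae hi] with u hau h_le
      by_cases hub : u ∈ Iic (b i)
      · rw [indicator_of_mem hub]
        exact (h_le ⟨hau, hub⟩).trans (le_norm_self _)
      · rw [indicator_of_notMem hub, norm_zero]
        exact norm_nonneg _
    · filter_upwards [ae_restrict_mem measurableSet_Ioi, ae_restrict_of_ae h_lim] with u hau hu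
      refine (hu hau).congr' ?_
      filter_upwards [hb.eventually_ge_atTop u] with i hi
      rw [indicator_of_mem (mem_Iic.2 hi)]
  refine h_truncated.congr' ?_
  filter_upwards [hb.eventually_ge_atTop a] with i hi
  rw [setIntegral_indicator measurableSet_Iic, Ioi_inter_Iic, integral_of_le hi]

theorem tendsto_smul_sub_of_hasDerivWithinAt_Ioi {E : Type*} [NormedAddCommGroup E]
    [NormedSpace ℝ E] {f : ℝ → E} {f' : E} {x u : ℝ} (hf : HasDerivWithinAt f f' (Ioi x) x)
    (hu : 0 < u) :
    Tendsto (fun t : ℝ => t • (f (x + u / t) - f x)) atTop (𝓝 (u • f')) := by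
  have h_mem : ∀ᶠ t in atTop, x + u / t ∈ Ioi x := by
    filter_upwards [eventually_gt_atTop 0] with t ht
    exact lt_add_of_pos_right x (div_pos hu ht)
  have h_scale : Tendsto (fun t : ℝ => t • (u / t)) atTop (𝓝 u) := by
    refine tendsto_const_nhds.congr' ?_
    filter_upwards [eventually_ne_atTop 0] with t ht
    exact (mul_div_cancel₀ u ht).symm
  exact hf.hasFDerivWithinAt.lim (tendsto_const_nhds.div_atTop tendsto_id) h_mem h_scale

theorem le_of_hasDerivWithinAt_Ioi_of_mul_sub_le {f : ℝ → ℝ} {f' c x : ℝ}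
    (hf : HasDerivWithinAt f f' (Ioi x) x) (h_le : ∀ᶠ y in 𝓝[>] x, c * (y - x) ≤ f y - f x) :
    c ≤ f' := by
  rw [hasDerivWithinAt_iff_tendsto_slope' self_notMem_Ioi] at hf
  refine ge_of_tendsto hf ?_
  filter_upwards [h_le, self_mem_nhdsWithin] with y hy hxy
  rwa [slope_def_field, le_div_iff₀ (sub_pos.2 hxy)]

theorem integral_exp_neg_mul_Ioi_zero {m : ℝ} (hm : 0 < m) :
    ∫ u in Ioi (0 : ℝ), exp (-(m * u)) = m⁻¹ := by
  simpa [neg_mul, neg_div_neg_eq] using integral_exp_mul_Ioi (neg_lt_zero.2 hm) 0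

theorem tendsto_integral_exp_neg_mul_comp_div {A : ℝ → ℝ} {m c : ℝ}
    (hA_cont : ContinuousOn A (Ioc 0 1)) (hA₀ : A 0 = 0) (hA_deriv : HasDerivWithinAt A m (Ioi 0) 0)
    (hc : 0 < c) (hA_ge : ∀ x ∈ Ioc (0 : ℝ) 1, c * x ≤ A x) :
    Tendsto (fun t => ∫ u in (0 : ℝ)..t, exp (-(t * A (u / t)))) atTop (𝓝 m⁻¹) := by
  have h_mem {t u : ℝ} (hu : u ∈ Ioc 0 t) : u / t ∈ Ioc (0 : ℝ) 1 :=
    have ht := hu.1.trans_le hu.2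
    ⟨div_pos hu.1 ht, (div_le_one ht).2 hu.2⟩
  have h_ge {t u : ℝ} (hu : u ∈ Ioc 0 t) : c * u ≤ t * A (u / t) := by
    have ht := hu.1.trans_le hu.2
    calc c * u = t * (c * (u / t)) := by field_simp
      _ ≤ t * A (u / t) := mul_le_mul_of_nonneg_left (hA_ge _ (h_mem hu)) ht.le
  have h_lim {u : ℝ} (hu : 0 < u) : Tendsto (fun t => t * A (u / t)) atTop (𝓝 (m * u)) := by
    simpa only [zero_add, hA₀, sub_zero, smul_eq_mul, mul_comm u] using
      tendsto_smul_sub_of_hasDerivWithinAt_Ioi hA_deriv hu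
  have hm : 0 < m := by
    refine hc.trans_le (le_of_hasDerivWithinAt_Ioi_of_mul_sub_le hA_deriv ?_)
    filter_upwards [Ioc_mem_nhdsGT one_pos] with x hx
    simpa only [hA₀, sub_zero] using hA_ge x hx
  rw [← integral_exp_neg_mul_Ioi_zero hm]
  refine tendsto_intervalIntegral_integral_Ioi_of_dominated (bound := fun u => exp (-c * u))
    tendsto_id (.of_forall fun t => ?_) (.of_forall fun t => .of_forall fun u hu => ?_)
    (integrableOn_exp_mul_Ioi (neg_lt_zero.2 hc) 0)
    (.of_forall fun u hu => (continuous_exp.tendsto _).comp (h_lim hu).neg)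
  · have h_comp : ContinuousOn (fun u => A (u / t)) (Ioc 0 t) :=
      hA_cont.comp (by fun_prop) fun u hu => h_mem hu
    exact (continuous_exp.comp_continuousOn
      (continuousOn_const.mul h_comp).neg).aestronglyMeasurable measurableSet_Ioc
  · rw [norm_of_nonneg (exp_pos _).le, neg_mul]
    exact exp_le_exp.2 (neg_le_neg (h_ge hu))

theorem tendsto_mul_integral_exp_neg_mul {A : ℝ → ℝ} {m c : ℝ} (hA_cont : ContinuousOn A (Ioc 0 1))
    (hA₀ : A 0 = 0) (hA_deriv : HasDerivWithinAt A m (Ioi 0) 0) (hc : 0 < c)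
    (hA_ge : ∀ x ∈ Ioc (0 : ℝ) 1, c * x ≤ A x) :
    Tendsto (fun t => t * ∫ x in (0 : ℝ)..1, exp (-(t * A x))) atTop (𝓝 m⁻¹) := by
  refine (tendsto_integral_exp_neg_mul_comp_div hA_cont hA₀ hA_deriv hc hA_ge).congr' ?_
  filter_upwards [eventually_ne_atTop 0] with t ht
  have h_subst := integral_comp_div (a := 0) (b := t) (fun x => exp (-(t * A x))) ht
  rwa [zero_div, div_self ht, smul_eq_mul] at h_subst

theorem integral_exp_neg_integral_comp_div (a : ℝ → ℝ) {t : ℝ} (ht : t ≠ 0) :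
    ∫ s in (0 : ℝ)..t, exp (-∫ v in s..t, a (v / t)) =
      t * ∫ x in (0 : ℝ)..1, exp (-(t * ∫ v in (1 - x)..1, a v)) := by
  have h_outer := mul_integral_comp_sub_mul (a := 0) (b := 1)
    (f := fun s => exp (-∫ v in s..t, a (v / t))) t t
  have h_inner (x : ℝ) : ∫ v in (t - t * x)..t, a (v / t) = t * ∫ v in (1 - x)..1, a v := by
    rw [integral_comp_div a ht, sub_div, div_self ht, mul_div_cancel_left₀ x ht, smul_eq_mul]
  simpa only [h_inner, mul_one, mul_zero, sub_self, sub_zero] using h_outer.symm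

theorem hasDerivWithinAt_integral_const_sub {E : Type*} [NormedAddCommGroup E] [NormedSpace ℝ E]
    [CompleteSpace E] {f : ℝ → E} {b : ℝ} (h_meas : StronglyMeasurableAtFilter f (𝓝[Iic b] b))
    (hf : ContinuousWithinAt f (Iic b) b) :
    HasDerivWithinAt (fun x => ∫ v in (b - x)..b, f v) (f b) (Ioi 0) 0 := by
  have h_left : HasDerivWithinAt (fun y => ∫ v in y..b, f v) (-f b) (Iic b) (b - 0) := by
    rw [sub_zero]
    exact integral_hasDerivWithinAt_left .refl h_meas hf
  have h_comp := h_left.scomp (0 : ℝ) ((hasDerivWithinAt_id (0 : ℝ) (Ioi 0)).const_sub b)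
    fun x (hx : 0 < x) => sub_le_self b hx.le
  exact h_comp.congr_deriv (by rw [neg_one_smul, neg_neg])

theorem tendsto_integral_exp_neg_integral_comp_div {a : ℝ → ℝ} {c : ℝ}
    (ha : IntervalIntegrable a volume 0 1) (ha_one : ContinuousWithinAt a (Iic 1) 1) (hc : 0 < c)
    (ha_ge : ∀ x ∈ Ioc (0 : ℝ) 1, c * x ≤ ∫ v in (1 - x)..1, a v) :
    Tendsto (fun t => ∫ s in (0 : ℝ)..t, exp (-∫ v in s..t, a (v / t))) atTop (𝓝 (a 1)⁻¹) := by
  have h_cont : ContinuousOn (fun x => ∫ v in (1 - x)..1, a v) (Ioc 0 1) := by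
    have h := continuousOn_primitive_interval_left ((intervalIntegrable_iff').1 ha)
    refine h.comp (by fun_prop) fun x hx => ?_
    rw [uIcc_of_le zero_le_one]
    exact ⟨sub_nonneg.2 hx.2, sub_le_self 1 hx.1.le⟩
  have h_meas : StronglyMeasurableAtFilter a (𝓝[Iic 1] 1) :=
    ⟨Ioc 0 1, Ioc_mem_nhdsLE zero_lt_one, ha.aestronglyMeasurable⟩
  refine (tendsto_mul_integral_exp_neg_mul h_cont (by rw [sub_zero, integral_same])
    (hasDerivWithinAt_integral_const_sub h_meas ha_one) hc ha_ge).congr' ?_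
  filter_upwards [eventually_ne_atTop 0] with t ht
  rw [integral_exp_neg_integral_comp_div a ht]

theorem integral_one_sub_affine (p q x : ℝ) :
    ∫ v in (1 - x)..1, ((1 - v) * p + v * q) = x * ((1 - x / 2) * q + x / 2 * p) := by
  have h_deriv (v : ℝ) :
      HasDerivAt (fun v => (v - v ^ 2 / 2) * p + v ^ 2 / 2 * q) ((1 - v) * p + v * q) v := by
    have h_sq : HasDerivAt (fun v : ℝ => v ^ 2 / 2) v v := by
      simpa using (hasDerivAt_pow 2 v).div_const 2
    exact (((hasDerivAt_id v).sub h_sq).mul_const p).add (h_sq.mul_const q)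
  rw [integral_eq_sub_of_hasDerivAt (fun v _ => h_deriv v)
    ((by fun_prop : Continuous _).intervalIntegrable _ _)]
  ring

theorem min_mul_le_integral_one_sub_affine (p q : ℝ) {x : ℝ} (hx : x ∈ Ioc (0 : ℝ) 1) :
    min q ((q + p) / 2) * x ≤ ∫ v in (1 - x)..1, ((1 - v) * p + v * q) := by
  rw [integral_one_sub_affine, mul_comm]
  refine mul_le_mul_of_nonneg_left ?_ hx.1.le
  calc min q ((q + p) / 2) ≤ (1 - x) * q + x * ((q + p) / 2) :=
        Convex.min_le_combo q _ (sub_nonneg.2 hx.2) hx.1.le (sub_add_cancel 1 x)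
    _ = (1 - x / 2) * q + x / 2 * p := by ring

end

theorem linear_tempering_upper_bound_asymptotics_general
    (anu api : ℝ) (hapi : 0 < api) (hanu : -api < anu) :
    Tendsto (fun t : ℝ =>
        2 * api * t * ((1 / t) * ∫ s in (0 : ℝ)..t,
          Real.exp (-(2 * ∫ v in s..t, ((1 - v / t) * anu + (v / t) * api)))))
      atTop (nhds 1) := by
  have h_cont : Continuous fun v : ℝ => 2 * ((1 - v) * anu + v * api) := by fun_prop
  have h_rate : 0 < 2 * min api ((api + anu) / 2) :=
    mul_pos two_pos (lt_min hapi (by linarith))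
  have h_lim := tendsto_integral_exp_neg_integral_comp_div (h_cont.intervalIntegrable 0 1)
    h_cont.continuousWithinAt h_rate fun x hx => by
      rw [intervalIntegral.integral_const_mul, mul_assoc]
      exact mul_le_mul_of_nonneg_left (min_mul_le_integral_one_sub_affine anu api hx) two_pos.le
  simp only [intervalIntegral.integral_const_mul, sub_self, zero_mul, one_mul, zero_add] at h_lim
  have h_normalized := h_lim.const_mul (2 * api)
  rw [mul_inv_cancel₀ (by positivity)] at h_normalized
  refine h_normalized.congr' ?_
  filter_upwards [eventually_ne_atTop 0] with t ht
  rw [mul_assoc (2 * api), ← mul_assoc t, mul_one_div_cancel ht, one_mul]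

/-- For 0 < α_π < α_ν and the linear schedule α_v = (1 − v/t)α_ν + (v/t)α_π,
the quantity G_t = (1/t)∫₀ᵗ exp(−2∫ₛᵗ α_v dv) ds satisfies G_t ~ 1/(2α_π t) as t → ∞;
that is, 2α_π t · G_t → 1 as t → ∞. -/
theorem linear_tempering_upper_bound_asymptotics
    (anu api : ℝ) (hapi : 0 < api) (hord : api < anu) :
    Tendsto (fun t : ℝ =>
        2 * api * t * ((1 / t) * ∫ s in (0 : ℝ)..t,
          Real.exp (-(2 * ∫ v in s..t, ((1 - v / t) * anu + (v / t) * api)))))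
      atTop (nhds 1) :=
  linear_tempering_upper_bound_asymptotics_general anu api hapi (by linarith)
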